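/- Let k ≥ 2 be an integer, let u be a real number with 0 < |u| < 1/2, and let L ≥ 0. Then ∑_{ℓ=2}^k I_{k,ℓ}(u,L) · Ĩ_{k,ℓ}(u,L) = (2π / (u · sin(2πu))) · 4^{1−k} · L^{2k−4} · ∑_{p=1}^∞ u^{2p} · L^{2p} · 2·p! / ((2p)! · (k−2)! · (k+p−2)!), where the series on the right converges absolutely. -/

import Mathlib

open Real MeasureTheory

/-- `I_{k,ℓ}(u,L)`: the integral of `exp(2u(v₁+⋯+v_{ℓ−1}))` over the open simplex
`{v ∈ ℝ^{k−1} : vᵢ > 0, v₁+⋯+v_{k−1} < L/2}` (coordinates are 0-indexed: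
`v i` is `v_{i+1}`). -/
noncomputable def Ikl (k l : ℕ) (u L : ℝ) : ℝ :=
  ∫ v in {v : Fin (k-1) → ℝ | (∀ i, 0 < v i) ∧ ∑ i, v i < L/2},
    Real.exp (2 * u * ∑ i ∈ Finset.univ.filter (fun i : Fin (k-1) => i.val < l - 1), v i)

/-- The `j`-th (1-indexed) coordinate `w_j` for `1 ≤ j ≤ k−1`, with the convention
`w_k = L/2 − (w₁+⋯+w_{k−1})`. -/
noncomputable def wcoord (k : ℕ) (L : ℝ) (w : Fin (k-1) → ℝ) (j : ℕ) : ℝ :=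
  if h : j - 1 < k - 1 then w ⟨j - 1, h⟩ else L/2 - ∑ i, w i

/-- `Ĩ_{k,ℓ}(u,L)`: the integral of
`exp(−2u(w₂+⋯+w_ℓ))·(1−e^{−w_ℓ})^{−2u}·(1−e^{−w₁})^{2u}` over the open simplex
`{w ∈ ℝ^{k−1} : wᵢ > 0, w₁+⋯+w_{k−1} < L/2}`, where `w_k = L/2 − (w₁+⋯+w_{k−1})`. -/
noncomputable def Itkl (k l : ℕ) (u L : ℝ) : ℝ :=
  ∫ w in {w : Fin (k-1) → ℝ | (∀ i, 0 < w i) ∧ ∑ i, w i < L/2},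
    Real.exp (-(2*u) * ∑ j ∈ Finset.Icc 2 l, wcoord k L w j)
      * (1 - Real.exp (-(wcoord k L w l))) ^ (-(2*u))
      * (1 - Real.exp (-(wcoord k L w 1))) ^ (2*u)

noncomputable def CF (a : ℝ) : ℕ → ℕ → ℝ → ℝ
  | 0, 0, _ => 0
  | 0, q+1, T => T^q / (q.factorial : ℝ)
  | p+1, 0, T => Real.exp (a*T) * T^p / (p.factorial : ℝ)
  | p+1, q+1, T => (CF a (p+1) q T - CF a p (q+1) T) / a
termination_by p q => p + q

theorem CF_00 (a T : ℝ) : CF a 0 0 T = 0 := by simp [CF]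
theorem CF_0s (a : ℝ) (q : ℕ) (T : ℝ) : CF a 0 (q+1) T = T^q / (q.factorial : ℝ) := by simp [CF]
theorem CF_s0 (a : ℝ) (p : ℕ) (T : ℝ) :
    CF a (p+1) 0 T = Real.exp (a*T) * T^p / (p.factorial : ℝ) := by simp [CF]
theorem CF_ss (a : ℝ) (p q : ℕ) (T : ℝ) :
    CF a (p+1) (q+1) T = (CF a (p+1) q T - CF a p (q+1) T) / a := by rw [CF]

theorem CF_rel (a : ℝ) (ha : a ≠ 0) (p q : ℕ) (T : ℝ) :
    CF a (p+1) q T = a * CF a (p+1) (q+1) T + CF a p (q+1) T := by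
  rw [CF_ss]; field_simp; ring

theorem CF_deriv0 (a : ℝ) (q : ℕ) (T : ℝ) : HasDerivAt (CF a 0 (q+1)) (CF a 0 q T) T := by
  have h : CF a 0 (q+1) = fun T => T^q / (q.factorial : ℝ) := by funext T; rw [CF]
  rw [h]
  cases q with
  | zero => simpa [CF] using hasDerivAt_const T (1:ℝ)
  | succ q =>
    have := (hasDerivAt_pow (q+1) T).div_const ((q+1).factorial : ℝ)
    refine this.congr_deriv ?_
    rw [CF_0s, Nat.factorial_succ]; push_cast
    have : (q.factorial : ℝ) ≠ 0 := by positivity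
    field_simp

theorem CF_derivE (a : ℝ) (p : ℕ) (T : ℝ) :
    HasDerivAt (CF a (p+1) 0) (a * CF a (p+1) 0 T + CF a p 0 T) T := by
  have h : CF a (p+1) 0 = fun T => Real.exp (a*T) * T^p / (p.factorial : ℝ) := by
    funext T; rw [CF]
  rw [h]
  have e : HasDerivAt (fun T : ℝ => Real.exp (a*T)) (Real.exp (a*T) * a) T := by
    simpa using ((hasDerivAt_id T).const_mul a).exp
  have := (e.mul (hasDerivAt_pow p T)).div_const (p.factorial : ℝ)
  refine this.congr_deriv ?_
  cases p with
  | zero => simp [CF_00]; ring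
  | succ p =>
    rw [CF_s0, Nat.factorial_succ]; push_cast
    have : (p.factorial : ℝ) ≠ 0 := by positivity
    field_simp

theorem CF_deriv (a : ℝ) (ha : a ≠ 0) (N : ℕ) : ∀ p q : ℕ, p + q = N → ∀ T : ℝ,
    HasDerivAt (CF a (p+1) (q+1)) (CF a (p+1) q T) T := by
  induction N using Nat.strong_induction_on with
  | _ N ih =>
    intro p q hpq T
    have h : CF a (p+1) (q+1) = fun T => (CF a (p+1) q T - CF a p (q+1) T) / a := by
      funext T; rw [CF]
    have h1 : HasDerivAt (CF a p (q+1)) (CF a p q T) T := by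
      cases p with
      | zero => exact CF_deriv0 a q T
      | succ p => exact ih (p+q) (by omega) p q rfl T
    rw [h]
    cases q with
    | zero =>
      refine (((CF_derivE a p T).sub h1).div_const a).congr_deriv ?_
      field_simp; ring
    | succ q =>
      refine (((ih (p+q) (by omega) p q rfl T).sub h1).div_const a).congr_deriv ?_
      rw [CF_ss]

theorem CF_deriv' (a : ℝ) (ha : a ≠ 0) (p q : ℕ) (T : ℝ) :
    HasDerivAt (CF a (p+1) (q+1)) (CF a (p+1) q T) T := CF_deriv a ha _ p q rfl T

theorem CF_zero (a : ℝ) (N : ℕ) : ∀ p q : ℕ, p + q = N → CF a (p+1) (q+1) 0 = 0 := by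
  induction N using Nat.strong_induction_on with
  | _ N ih =>
    intro p q hpq
    rw [CF]
    rcases p with _ | p <;> rcases q with _ | q
    · simp [CF]
    · rw [ih q (by omega) 0 q (by omega)]; simp [CF]
    · rw [ih p (by omega) p 0 (by omega)]; simp [CF]
    · rw [ih _ (by omega) p (q+1) rfl, ih _ (by omega) (p+1) q rfl]; simp

theorem CF_cont (a : ℝ) (ha : a ≠ 0) (p q : ℕ) : Continuous (CF a p (q+1)) := by
  cases p with
  | zero => exact continuous_iff_continuousAt.2 fun T => (CF_deriv0 a q T).continuousAt
  | succ p => exact continuous_iff_continuousAt.2 fun T => (CF_deriv' a ha p q T).continuousAt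

/-- extension by zero, in `ENNReal` -/
noncomputable def ind (h : ℝ → ℝ) : ℝ → ENNReal :=
  (Set.Ioi (0:ℝ)).indicator (fun x => ENNReal.ofReal (h x))

theorem ind_meas {h : ℝ → ℝ} (hh : Measurable h) : Measurable (ind h) :=
  (hh.ennreal_ofReal).indicator measurableSet_Ioi

theorem conv_apply (f g : ℝ → ℝ) (hf : ∀ x, 0 < x → 0 ≤ f x) (T : ℝ) :
    (ind f ⋆ₗ ind g) T = ∫⁻ x in Set.Ioo 0 T, ENNReal.ofReal (f x * g (T - x)) := by
  rw [lconvolution_def, ← lintegral_indicator measurableSet_Ioo]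
  congr 1; funext x
  unfold ind
  by_cases h1 : 0 < x
  · by_cases h2 : x < T
    · have h3 : 0 < -x + T := by linarith
      simp [Set.indicator, h1, h2, ENNReal.ofReal_mul (hf x h1), neg_add_eq_sub]
    · have h3 : ¬ (0 < -x + T) := by linarith
      simp only [Set.indicator, Set.mem_Ioi, Set.mem_Ioo, h1, h2, h3]; simp
  · simp [Set.indicator, h1]

theorem conv_exp (a : ℝ) (H h : ℝ → ℝ) (h0 : H 0 = 0)
    (hd : ∀ T, HasDerivAt H (a * H T + h T) T) (hc : Continuous h) (hn : ∀ x, 0 ≤ x → 0 ≤ h x) :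
    (∀ x, 0 ≤ x → 0 ≤ H x) ∧ ind (fun x => Real.exp (a*x)) ⋆ₗ ind h = ind H := by
  have key : ∀ T, 0 ≤ T → ∫ x in (0:ℝ)..T, Real.exp (a*(T-x)) * h x = H T := by
    intro T hT
    have : ∀ x ∈ Set.uIcc 0 T, HasDerivAt (fun x => Real.exp (a*(T-x)) * H x)
        (Real.exp (a*(T-x)) * h x) x := by
      intro x _
      have e : HasDerivAt (fun x : ℝ => Real.exp (a*(T-x))) (Real.exp (a*(T-x)) * (a*(-1))) x := by
        exact (((hasDerivAt_id x).const_sub T).const_mul a).exp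
      refine (e.mul (hd x)).congr_deriv ?_
      ring
    rw [intervalIntegral.integral_eq_sub_of_hasDerivAt this
      (Continuous.intervalIntegrable (by fun_prop) _ _)]
    simp [h0]
  have hH : ∀ x, 0 ≤ x → 0 ≤ H x := by
    intro T hT
    rw [← key T hT]
    apply intervalIntegral.integral_nonneg hT
    intro x hx
    exact mul_nonneg (Real.exp_pos _).le (hn x hx.1)
  refine ⟨hH, ?_⟩
  rw [lconvolution_comm]
  funext T
  rw [conv_apply _ _ (fun x hx => hn x hx.le)]
  by_cases hT : 0 < T
  · have : ind H T = ENNReal.ofReal (H T) := by simp [ind, hT]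
    rw [this, ← key T hT.le, intervalIntegral.integral_of_le hT.le,
      integral_Ioc_eq_integral_Ioo, ofReal_integral_eq_lintegral_ofReal]
    · congr 1; funext x; congr 1; ring
    · exact (Continuous.integrableOn_Icc (by fun_prop)).mono_set Set.Ioo_subset_Icc_self
    · refine (ae_restrict_iff' measurableSet_Ioo).2 (Filter.Eventually.of_forall fun x hx => ?_)
      exact mul_nonneg (Real.exp_pos _).le (hn x hx.1.le)
  · simp [ind, hT]

theorem CF_nonneg0 (a : ℝ) (q : ℕ) : ∀ x, 0 ≤ x → 0 ≤ CF a 0 (q+1) x := by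
  intro x hx; rw [CF]; positivity

theorem conv_one (a : ℝ) (q : ℕ) :
    ind (fun _ => 1) ⋆ₗ ind (CF a 0 (q+1)) = ind (CF a 0 (q+2)) := by
  have := (conv_exp 0 (CF a 0 (q+2)) (CF a 0 (q+1)) (by simp [CF]) (fun T => by
    simpa using CF_deriv0 a (q+1) T)
    (continuous_iff_continuousAt.2 fun T => (CF_deriv0 a q T).continuousAt) (CF_nonneg0 a q)).2
  simpa using this

theorem CF_nonneg (a : ℝ) (ha : a ≠ 0) (p q : ℕ) : ∀ x, 0 ≤ x → 0 ≤ CF a p (q+1) x := by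
  induction p with
  | zero => exact CF_nonneg0 a q
  | succ p ih =>
    exact (conv_exp a (CF a (p+1) (q+1)) (CF a p (q+1)) (CF_zero a _ p q rfl) (fun T => by
      rw [← CF_rel a ha]; exact CF_deriv' a ha p q T) (CF_cont a ha p q) ih).1

theorem conv_e (a : ℝ) (ha : a ≠ 0) (p q : ℕ) :
    ind (fun x => Real.exp (a*x)) ⋆ₗ ind (CF a p (q+1)) = ind (CF a (p+1) (q+1)) := 
  (conv_exp a (CF a (p+1) (q+1)) (CF a p (q+1)) (CF_zero a _ p q rfl) (fun T => by
      rw [← CF_rel a ha]; exact CF_deriv' a ha p q T) (CF_cont a ha p q) (CF_nonneg a ha p q)).2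

noncomputable def JJ : ℕ → (ℕ → ℝ → ENNReal) → ℝ → ENNReal
  | 0, F => F 0
  | N+1, F => F 0 ⋆ₗ JJ N (fun i => F (i+1))

theorem JJ_meas (N : ℕ) : ∀ (F : ℕ → ℝ → ENNReal), (∀ i, Measurable (F i)) →
    Measurable (JJ N F) := by
  induction N with
  | zero => intro F h; exact h 0
  | succ N ih => intro F h; exact measurable_lconvolution _ (h 0) (ih _ fun i => h (i+1))

theorem JJ_eq (N : ℕ) : ∀ (F : ℕ → ℝ → ENNReal), (∀ i, Measurable (F i)) → ∀ T : ℝ,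
    ∫⁻ v : Fin N → ℝ, (∏ i : Fin N, F i (v i)) * F N (T - ∑ i, v i) = JJ N F T := by
  induction N with
  | zero =>
    intro F h T
    simp [JJ, lintegral_unique, volume_pi]
  | succ N ih =>
    intro F h T
    have := h
    set G : ℝ × (Fin N → ℝ) → ENNReal := fun z => (F 0 z.1 * ∏ i : Fin N, F (i+1) (z.2 i)) *
          F (N+1) (T - (z.1 + ∑ i, z.2 i)) with hG
    have mG : Measurable G := by rw [hG]; fun_prop
    have mp : MeasurePreserving (fun v : Fin (N+1) → ℝ => ((v 0, fun i => v (Fin.succ i)) :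
        ℝ × (Fin N → ℝ))) volume volume :=
      volume_preserving_piFinSuccAbove (fun _ : Fin (N+1) => ℝ) 0
    have e : ∀ v : Fin (N+1) → ℝ, (∏ i : Fin (N+1), F i (v i)) * F (N+1) (T - ∑ i, v i)
        = G (v 0, fun i => v (Fin.succ i)) := by
      intro v
      simp only [Fin.prod_univ_succ, Fin.sum_univ_succ]
      rfl
    refine (lintegral_congr e).trans ?_
    refine (mp.lintegral_comp mG).trans ?_
    rw [Measure.volume_eq_prod, lintegral_prod]
    · rw [JJ, lconvolution_def]
      congr 1; funext x
      rw [← ih _ (fun i => h (i+1)), ← lintegral_const_mul]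
      · congr 1; funext v
        simp only [hG, mul_assoc]
        congr 3
        ring
      · fun_prop
    · apply Measurable.aemeasurable
      fun_prop

theorem measurableSet_lt_forall (N : ℕ) : MeasurableSet {v : Fin N → ℝ | ∀ i, 0 < v i} := by
  have : {v : Fin N → ℝ | ∀ i, 0 < v i} = ⋂ i, {v : Fin N → ℝ | 0 < v i} := by
    ext v; simp
  rw [this]
  exact MeasurableSet.iInter fun i => measurableSet_lt measurable_const (measurable_pi_apply i)

theorem simplex_int (N : ℕ) (φ : ℕ → ℝ → ℝ) (hm : ∀ i, Measurable (φ i))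
    (hp : ∀ i x, 0 < x → 0 ≤ φ i x) (T : ℝ) :
    ∫ v in {v : Fin N → ℝ | (∀ i, 0 < v i) ∧ ∑ i, v i < T},
      (∏ i : Fin N, φ i (v i)) * φ N (T - ∑ i, v i) = (JJ N (fun i => ind (φ i)) T).toReal := by
  have hs : MeasurableSet {v : Fin N → ℝ | (∀ i, 0 < v i) ∧ ∑ i, v i < T} := by
    apply MeasurableSet.inter
    · exact measurableSet_lt_forall N
    · exact measurableSet_lt (f := fun v : Fin N → ℝ => ∑ i, v i) (by fun_prop) measurable_const
  rw [integral_eq_lintegral_of_nonneg_ae]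
  · congr 1
    rw [← JJ_eq N _ (fun i => ind_meas (hm i)), ← lintegral_indicator hs]
    congr 1; funext v
    by_cases h : (∀ i, 0 < v i) ∧ ∑ i, v i < T
    · rw [Set.indicator_of_mem (by exact h), ENNReal.ofReal_mul
        (Finset.prod_nonneg fun (i : Fin N) _ => hp i _ (h.1 i)), ENNReal.ofReal_prod_of_nonneg
        (fun (i : Fin N) _ => hp i _ (h.1 i))]
      simp [ind, h.1, h.2]
    · rw [Set.indicator_of_notMem (by exact h)]
      symm
      rw [not_and_or] at h
      rcases h with h | h
      · push Not at h
        obtain ⟨i, hi⟩ := h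
        rw [Finset.prod_eq_zero (Finset.mem_univ i), zero_mul]
        simp [ind, hi]
      · simp [ind, not_lt.1 h]
  · refine (ae_restrict_iff' hs).2 (Filter.Eventually.of_forall fun v hv => ?_)
    exact mul_nonneg (Finset.prod_nonneg fun (i : Fin N) _ => hp i _ (hv.1 i)) (hp _ _ (by linarith [hv.2]))
  · apply Measurable.aestronglyMeasurable
    fun_prop

theorem JJ_I (a : ℝ) (ha : a ≠ 0) (p : ℕ) : ∀ (q : ℕ) (F : ℕ → ℝ → ENNReal),
    (∀ i, i < p → F i = ind (fun x => Real.exp (a*x))) → (∀ i, p ≤ i → F i = ind (fun _ => 1)) →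
    JJ (p+q) F = ind (CF a p (q+1)) := by
  induction p with
  | zero =>
    intro q
    induction q with
    | zero =>
      intro F _ h
      rw [JJ, h 0 (by omega)]; congr 1; funext T; simp [CF]
    | succ q ih =>
      intro F h1 h2
      rw [← conv_one, ← ih (fun i => F (i+1)) (by simp) (fun i _ => h2 _ (by omega)),
        ← h2 0 le_rfl]; rfl
  | succ p ih =>
    intro q F h1 h2
    rw [← conv_e a ha, ← ih q (fun i => F (i+1)) (fun i _ => h1 _ (by omega))
      (fun i _ => h2 _ (by omega)), ← h1 0 (by omega), Nat.add_right_comm]; rfl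

theorem conv_smul (c : ENNReal) (f g : ℝ → ENNReal) (hf : Measurable f) (hg : Measurable g) :
    f ⋆ₗ (fun x => c * g x) = fun x => c * (f ⋆ₗ g) x := by
  funext x
  simp only [lconvolution_def]
  rw [← lintegral_const_mul _ (by fun_prop)]
  congr 1; funext y; ring

theorem JJ_K (a : ℝ) (ha : a ≠ 0) (c : ENNReal) (f g : ℝ → ENNReal) (hf : Measurable f)
    (hg : Measurable g) (hfg : f ⋆ₗ g = fun x => c * ind (CF a 1 1) x) (p : ℕ) :
    ∀ (q : ℕ) (F : ℕ → ℝ → ENNReal),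
    (∀ i, i < p → F i = ind (fun x => Real.exp (a*x))) → F p = g →
    (∀ i, p < i → F i = ind (fun _ => 1)) →
    f ⋆ₗ JJ (p+q) F = fun x => c * ind (CF a (p+1) (q+1)) x := by
  have m1 : ∀ p q, Measurable (ind (CF a p (q+1))) := fun p q =>
    ind_meas (CF_cont a ha p q).measurable
  have m2 : Measurable (ind (fun _ => 1)) := ind_meas measurable_const
  have m3 : Measurable (ind (fun x => Real.exp (a*x))) := ind_meas (by fun_prop)
  induction p with
  | zero =>
    intro q F h1 h2 h3
    cases q with
    | zero => rw [JJ, h2, hfg]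
    | succ q =>
      have e1 : JJ (0+(q+1)) F = g ⋆ₗ ind (CF a 0 (q+1)) := by
        rw [← h2, ← JJ_I a ha 0 q (fun i => F (i+1)) (by simp) (fun i _ => h3 _ (by omega)),
          zero_add, zero_add]; rfl
      have e2 : ind (CF a 1 1) = ind (fun x => Real.exp (a*x)) ⋆ₗ ind (fun _ => 1) := by
        rw [← conv_e a ha]; congr 2; funext T; simp [CF]
      rw [e1, lconvolution_assoc hf hg (m1 _ _), hfg, lconvolution_comm,
        conv_smul _ _ _ (m1 _ _) (m1 _ _), lconvolution_comm, e2,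
        ← lconvolution_assoc m3 m2 (m1 _ _), conv_one, conv_e a ha]
  | succ p ih =>
    intro q F h1 h2 h3
    have e1 : JJ (p+1+q) F = ind (fun x => Real.exp (a*x)) ⋆ₗ JJ (p+q) (fun i => F (i+1)) := by
      rw [← h1 0 (by omega), Nat.add_right_comm]; rfl
    have mF : ∀ i, Measurable (F i) := by
      intro i
      rcases lt_trichotomy i (p+1) with h | h | h
      · rw [h1 i h]; exact m3
      · rw [h, h2]; exact hg
      · rw [h3 i h]; exact m2
    have mJ := JJ_meas (p+q) (fun i => F (i+1)) (fun i => mF _)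
    rw [e1, lconvolution_assoc hf m3 mJ, lconvolution_comm (f := f), ← lconvolution_assoc m3 hf mJ,
      ih q (fun i => F (i+1)) (fun i _ => h1 _ (by omega)) h2 (fun i _ => h3 _ (by omega)),
      conv_smul _ _ _ m3 (m1 _ _), conv_e a ha]

noncomputable def KK (a : ℝ) : ℝ := π * a / Real.sin (π * a)

theorem beta_val (a : ℝ) (h1 : -1 < a) (h2 : a < 1) (h0 : a ≠ 0) : 0 < KK a ∧
    ∫⁻ x in Set.Ioo (0:ℝ) 1, ENNReal.ofReal (x^a * (1-x)^(-a)) = ENNReal.ofReal (KK a) := by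
  have hB : ProbabilityTheory.beta (1+a) (1-a) = KK a := by
    unfold ProbabilityTheory.beta KK
    have : (1+a) + (1-a) = 2 := by ring
    rw [this, Real.Gamma_two, add_comm 1 a, Real.Gamma_add_one h0, mul_assoc,
      Real.Gamma_mul_Gamma_one_sub]
    ring
  have hpos := ProbabilityTheory.beta_pos (α := 1+a) (β := 1-a) (by linarith) (by linarith)
  rw [hB] at hpos
  refine ⟨hpos, ?_⟩
  have := ProbabilityTheory.lintegral_betaPDF_eq_one (α := 1+a) (β := 1-a)
    (by linarith) (by linarith)
  rw [ProbabilityTheory.lintegral_betaPDF, hB] at this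
  have e : ∀ x : ℝ, ENNReal.ofReal (1 / KK a * x ^ (1+a-1) * (1-x)^(1-a-1)) =
      ENNReal.ofReal (1 / KK a) * ENNReal.ofReal (x^a * (1-x)^(-a)) := by
    intro x
    rw [← ENNReal.ofReal_mul (by positivity), mul_assoc]
    congr 4 <;> ring
  simp_rw [e] at this
  rw [lintegral_const_mul _ (by fun_prop)] at this
  have h3 := congrArg (fun z => ENNReal.ofReal (KK a) * z) this
  simp only [← mul_assoc] at h3
  rw [← ENNReal.ofReal_mul hpos.le, mul_one_div_cancel hpos.ne'] at h3
  simpa using h3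

theorem inner_val (a : ℝ) (h1 : -1 < a) (h2 : a < 1) (h0 : a ≠ 0) (b : ℝ) (hb : 0 < b) :
    ∫⁻ s in Set.Ioi (0:ℝ), ENNReal.ofReal (s^a * (1/(s+b)^2)) =
      ENNReal.ofReal (KK a) * ENNReal.ofReal (b^(a-1)) := by
  have him : (fun x : ℝ => b * x / (1-x)) '' Set.Ioo 0 1 = Set.Ioi 0 := by
    ext s
    constructor
    · rintro ⟨x, ⟨hx, hx'⟩, rfl⟩
      have : 0 < 1 - x := by linarith
      exact div_pos (mul_pos hb hx) this
    · intro hs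
      have hs : 0 < s := hs
      refine ⟨s/(s+b), ⟨by positivity, (div_lt_one (by positivity)).2 (by linarith)⟩, ?_⟩
      have : 1 - s/(s+b) = b/(s+b) := by field_simp; ring
      simp only [this]
      field_simp
  rw [← him, lintegral_image_eq_lintegral_abs_deriv_mul measurableSet_Ioo
    (f' := fun x => b/(1-x)^2), ← (beta_val a h1 h2 h0).2, ← lintegral_mul_const _ (by fun_prop)]
  · apply setLIntegral_congr_fun measurableSet_Ioo
    rintro x ⟨hx, hx'⟩
    have hy : 0 < 1 - x := by linarith
    simp only
    rw [← ENNReal.ofReal_mul (by positivity), ← ENNReal.ofReal_mul (by positivity)]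
    congr 1
    rw [abs_of_pos (by positivity), Real.div_rpow (by positivity) hy.le,
      Real.mul_rpow hb.le hx.le, Real.rpow_neg hy.le, Real.rpow_sub_one hb.ne']
    have e : b * x/(1-x) + b = b/(1-x) := by field_simp; ring
    rw [e]
    have : (1-x)^a ≠ 0 := (Real.rpow_pos_of_pos hy a).ne'
    field_simp
  · rintro x ⟨hx, hx'⟩
    have hy : 1 - x ≠ 0 := by linarith
    have := (((hasDerivAt_id x).const_mul b).div ((hasDerivAt_id x).const_sub 1) hy)
    refine (this.congr_deriv ?_).hasDerivWithinAt
    simp only [id]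
    field_simp; ring
  · rintro x ⟨hx, hx'⟩ y ⟨hy, hy'⟩ hxy
    have h3 : 1 - x ≠ 0 := by linarith
    have h4 : 1 - y ≠ 0 := by linarith
    simp only at hxy
    field_simp at hxy
    linarith

theorem diff_val (c s : ℝ) (hc : 0 < c) (hc1 : c < 1) (hs : 0 < s) :
    ENNReal.ofReal (1/(s+c) - 1/(s+1)) = ∫⁻ b in Set.Ioo c 1, ENNReal.ofReal (1/(s+b)^2) := by
  have hd : ∀ b ∈ Set.uIcc c 1, HasDerivAt (fun b => -(1/(s+b))) (1/(s+b)^2) b := by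
    intro b hb
    rw [Set.uIcc_of_le hc1.le] at hb
    have : s + b ≠ 0 := by linarith [hb.1]
    have := (((hasDerivAt_id b).const_add s).inv this).neg
    simp only [one_div]
    refine this.congr_deriv ?_
    simp [neg_div]
  have hcont : ContinuousOn (fun b : ℝ => 1/(s+b)^2) (Set.Icc c 1) := by
    intro b hb
    have : s + b ≠ 0 := by linarith [hb.1]
    apply ContinuousAt.continuousWithinAt
    fun_prop (disch := positivity)
  have h := intervalIntegral.integral_eq_sub_of_hasDerivAt hd
    (ContinuousOn.intervalIntegrable (by rwa [Set.uIcc_of_le hc1.le]))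
  rw [intervalIntegral.integral_of_le hc1.le, integral_Ioc_eq_integral_Ioo] at h
  rw [← ofReal_integral_eq_lintegral_ofReal, h]
  · congr 1; ring
  · exact hcont.integrableOn_Icc.mono_set Set.Ioo_subset_Icc_self
  · exact Filter.Eventually.of_forall fun b => by positivity

theorem pow_val (a c : ℝ) (h0 : a ≠ 0) (hc : 0 < c) (hc1 : c < 1) :
    ∫⁻ b in Set.Ioo c 1, ENNReal.ofReal (b^(a-1)) = ENNReal.ofReal ((1-c^a)/a) := by
  have hd : ∀ b ∈ Set.uIcc c 1, HasDerivAt (fun b : ℝ => b^a/a) (b^(a-1)) b := by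
    intro b hb
    rw [Set.uIcc_of_le hc1.le] at hb
    have : b ≠ 0 := by linarith [hb.1]
    refine ((Real.hasDerivAt_rpow_const (p := a) (Or.inl this)).div_const a).congr_deriv ?_
    field_simp
  have hcont : ContinuousOn (fun b : ℝ => b^(a-1)) (Set.Icc c 1) := by
    intro b hb
    have : b ≠ 0 := by linarith [hb.1]
    exact (Real.continuousAt_rpow_const _ _ (Or.inl this)).continuousWithinAt
  have h := intervalIntegral.integral_eq_sub_of_hasDerivAt hd
    (ContinuousOn.intervalIntegrable (by rwa [Set.uIcc_of_le hc1.le]))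
  rw [intervalIntegral.integral_of_le hc1.le, integral_Ioc_eq_integral_Ioo] at h
  rw [← ofReal_integral_eq_lintegral_ofReal, h]
  · congr 1; rw [Real.one_rpow]; ring
  · exact hcont.integrableOn_Icc.mono_set Set.Ioo_subset_Icc_self
  · refine (ae_restrict_iff' measurableSet_Ioo).2 (Filter.Eventually.of_forall fun x hx => ?_)
    exact Real.rpow_nonneg (hc.le.trans hx.1.le) _

theorem s_int (a : ℝ) (h1 : -1 < a) (h2 : a < 1) (h0 : a ≠ 0) (c : ℝ) (hc : 0 < c) (hc1 : c < 1) :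
    ∫⁻ s in Set.Ioi (0:ℝ), ENNReal.ofReal (1/(s+c) - 1/(s+1)) * ENNReal.ofReal (s^a) =
      ENNReal.ofReal (KK a) * ENNReal.ofReal ((1-c^a)/a) := by
  have e : ∀ s ∈ Set.Ioi (0:ℝ),
      ENNReal.ofReal (1/(s+c) - 1/(s+1)) * ENNReal.ofReal (s^a) =
      ∫⁻ b in Set.Ioo c 1, ENNReal.ofReal (s^a * (1/(s+b)^2)) := by
    intro s hs
    have hs : 0 < s := hs
    rw [diff_val c s hc hc1 hs, ← lintegral_mul_const _ (by fun_prop)]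
    congr 1; funext b
    rw [← ENNReal.ofReal_mul (by positivity), mul_comm]
  rw [setLIntegral_congr_fun measurableSet_Ioi e, lintegral_lintegral_swap]
  · rw [← pow_val a c h0 hc hc1, ← lintegral_const_mul _ (by fun_prop)]
    apply setLIntegral_congr_fun measurableSet_Ioo
    intro b hb
    exact inner_val a h1 h2 h0 b (hc.trans hb.1)
  · apply Measurable.aemeasurable
    unfold Function.uncurry
    fun_prop

theorem w_int (a : ℝ) (h1 : -1 < a) (h2 : a < 1) (h0 : a ≠ 0) (T : ℝ) (hT : 0 < T) :
    ∫⁻ x in Set.Ioo 0 T, ENNReal.ofReal ((1 - Real.exp (-x))^a *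
      (Real.exp (-a*(T-x)) * (1 - Real.exp (-(T-x)))^(-a))) =
      ENNReal.ofReal (KK a) * ENNReal.ofReal ((1-Real.exp (-a*T))/a) := by
  have hc : 0 < Real.exp (-T) := Real.exp_pos _
  have hc1 : Real.exp (-T) < 1 := by rw [Real.exp_lt_one_iff]; linarith
  have hS := s_int a h1 h2 h0 (Real.exp (-T)) hc hc1
  have e1 : Real.exp (-T)^a = Real.exp (-a*T) := by
    rw [← Real.exp_mul]; congr 1; ring
  rw [e1] at hS
  rw [← hS]
  set c := Real.exp (-T) with hcdef
  have hcT : Real.exp T = 1/c := by rw [hcdef, Real.exp_neg]; simp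
  set φ : ℝ → ℝ := fun s => T + Real.log (s+c) - Real.log (s+1) with hφ
  have hexp : ∀ s, 0 < s → Real.exp (φ s) = (s+c)/(c*(s+1)) := by
    intro s hs
    rw [hφ, Real.exp_sub, Real.exp_add, Real.exp_log (by positivity), Real.exp_log (by positivity),
      hcT]
    field_simp
  have him : φ '' Set.Ioi 0 = Set.Ioo 0 T := by
    ext w
    constructor
    · rintro ⟨s, hs, rfl⟩
      have hs : 0 < s := hs
      constructor
      · rw [← Real.exp_lt_exp, hexp s hs, Real.exp_zero, lt_div_iff₀ (by positivity)]
        nlinarith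
      · rw [← Real.exp_lt_exp, hexp s hs, hcT, div_lt_div_iff₀ (by positivity) (by positivity)]
        nlinarith
    · rintro ⟨hw, hw'⟩
      have k1 : 1 < Real.exp w := by simpa using hw
      have k2 : Real.exp w < 1/c := by rw [← hcT]; simpa using hw'
      rw [lt_div_iff₀ hc, mul_comm] at k2
      have k3 : 0 < 1 - c * Real.exp w := by linarith
      have k3' := k3.ne'
      have k4 : 0 < c * (Real.exp w - 1) / (1 - c * Real.exp w) :=
        div_pos (mul_pos hc (by linarith)) k3
      refine ⟨_, k4, ?_⟩
      apply Real.exp_injective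
      rw [hexp _ k4]
      have k5 : c * (Real.exp w - 1) / (1 - c * Real.exp w) + c =
        c * Real.exp w * (1 - c) / (1 - c * Real.exp w) := by field_simp; ring
      have k6 : c * (Real.exp w - 1) / (1 - c * Real.exp w) + 1 =
        (1 - c) / (1 - c * Real.exp w) := by field_simp; ring
      rw [k5, k6]
      have : 1 - c ≠ 0 := by linarith
      field_simp
  rw [← him, lintegral_image_eq_lintegral_abs_deriv_mul measurableSet_Ioi
    (f' := fun s => 1/(s+c) - 1/(s+1))]
  · apply setLIntegral_congr_fun measurableSet_Ioi
    intro s hs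
    have hs : 0 < s := hs
    have hE := hexp s hs
    simp only
    have p1 : 0 < 1/(s+c) - 1/(s+1) := by
      rw [sub_pos]; apply one_div_lt_one_div_of_lt (by positivity); linarith
    rw [abs_of_pos p1]
    congr 2
    have q1 : 1 - Real.exp (-φ s) = s * (1-c)/(s+c) := by
      rw [Real.exp_neg, hE]; field_simp; ring
    have q2 : Real.exp (-(T - φ s)) = (s+c)/(s+1) := by
      rw [show -(T - φ s) = φ s - T by ring, Real.exp_sub, hE, hcT]; field_simp
    have q3 : Real.exp (-a*(T - φ s)) = ((s+c)/(s+1))^a := by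
      rw [← q2, ← Real.exp_mul]; congr 1; ring
    have q4 : 1 - (s+c)/(s+1) = (1-c)/(s+1) := by field_simp; ring
    have c1 : 0 < 1 - c := by linarith
    rw [q1, q3, q2, q4, Real.rpow_neg (by positivity), ← Real.inv_rpow (by positivity),
      ← Real.mul_rpow (by positivity) (by positivity),
      ← Real.mul_rpow (by positivity) (by positivity)]
    congr 1
    field_simp
  · intro s hs
    have hs : 0 < s := hs
    have d1 := ((hasDerivAt_id s).add_const c).log (by simp only [id]; positivity)
    have d2 := ((hasDerivAt_id s).add_const 1).log (by simp only [id]; positivity)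
    exact ((d1.const_add T).sub d2).hasDerivWithinAt
  · intro x hx y hy hxy
    have hx : 0 < x := hx
    have hy : 0 < y := hy
    have := congrArg Real.exp hxy
    rw [hexp x hx, hexp y hy] at this
    field_simp at this
    have h3 : (1-c) * (x-y) = 0 := by linear_combination this
    rcases mul_eq_zero.1 h3 with h | h <;> linarith

theorem CF11 (a T : ℝ) : CF a 1 1 T = (Real.exp (a*T) - 1)/a := by
  rw [CF_ss, CF_s0, CF_0s]; simp

theorem fg_conv (a : ℝ) (h1 : -1 < a) (h2 : a < 1) (h0 : a ≠ 0) :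
    ind (fun x => (1 - Real.exp (-x))^a) ⋆ₗ
      ind (fun x => Real.exp (-a*x) * (1 - Real.exp (-x))^(-a)) =
    fun x => ENNReal.ofReal (KK a) * ind (CF (-a) 1 1) x := by
  funext T
  rw [conv_apply]
  · by_cases hT : 0 < T
    · rw [w_int a h1 h2 h0 T hT]
      have : ind (CF (-a) 1 1) T = ENNReal.ofReal (CF (-a) 1 1 T) := by simp [ind, hT]
      rw [this, CF11]
      congr 2
      field_simp; ring
    · simp [ind, hT]
  · intro x hx
    apply Real.rpow_nonneg
    simp [hx.le]

theorem telescope (a : ℝ) (ha : a ≠ 0) (n : ℕ) (x y : ℝ) :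
    ∑ p ∈ Finset.range (n+1), a * (CF a (p+1) (n-p) x * CF (-a) (p+1) (n-p+1) y
      - CF a (p+1) (n-p+1) x * CF (-a) (p+1) (n-p) y
      - a * (CF a (p+1) (n-p+1) x * CF (-a) (p+1) (n-p+1) y))
    = (1 - Real.exp (a*x) * Real.exp (-a*y)) * (x*y)^n / (n.factorial : ℝ)^2 := by
  have key := Finset.sum_range_sub' (fun p => CF a p (n+1-p) x * CF (-a) p (n+1-p) y) (n+1)
  have hR : (1 - Real.exp (a*x) * Real.exp (-a*y)) * (x*y)^n / (n.factorial : ℝ)^2 =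
      CF a 0 (n+1-0) x * CF (-a) 0 (n+1-0) y -
      CF a (n+1) (n+1-(n+1)) x * CF (-a) (n+1) (n+1-(n+1)) y := by
    rw [Nat.sub_zero, Nat.sub_self, CF_0s, CF_0s, CF_s0, CF_s0, mul_pow]
    ring
  rw [hR, ← key]
  apply Finset.sum_congr rfl
  intro p hp
  have hp' : p ≤ n := by simpa [Nat.lt_succ_iff] using hp
  have e1 : n + 1 - p = n - p + 1 := by omega
  have e2 : n + 1 - (p+1) = n - p := by omega
  rw [e1, e2, CF_rel a ha p (n-p) x, CF_rel (-a) (neg_ne_zero.2 ha) p (n-p) y]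
  ring

noncomputable def SS (a : ℝ) (n : ℕ) (x y : ℝ) : ℝ :=
  ∑ p ∈ Finset.range (n+1), CF a (p+1) (n-p+1) x * CF (-a) (p+1) (n-p+1) y

theorem SS_int (a : ℝ) (ha : a ≠ 0) (n : ℕ) (T : ℝ) :
    SS a n T T = ∫ s in (0:ℝ)..T, 2 * Real.sinh (a*s) * (T^2-s^2)^n / (a * (n.factorial : ℝ)^2) := by
  have hd : ∀ t, HasDerivAt (fun t => Real.exp (a*(T-t)) * SS a n t (2*T-t))
      (2 * Real.sinh (a*(T-t)) * (T^2-(T-t)^2)^n / (a * (n.factorial : ℝ)^2)) t := by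
    intro t
    have e : HasDerivAt (fun x : ℝ => Real.exp (a*(T-x))) (Real.exp (a*(T-t)) * (a*(-1))) t := by
      exact (((hasDerivAt_id t).const_sub T).const_mul a).exp
    have g : HasDerivAt (fun t => SS a n t (2*T-t))
        (∑ p ∈ Finset.range (n+1), (CF a (p+1) (n-p) t * CF (-a) (p+1) (n-p+1) (2*T-t)
          + CF a (p+1) (n-p+1) t * (CF (-a) (p+1) (n-p) (2*T-t) * (-1)))) t := by
      unfold SS
      apply HasDerivAt.fun_sum
      intro p _
      exact (CF_deriv' a ha p (n-p) t).mul ((CF_deriv' (-a) (neg_ne_zero.2 ha) p (n-p)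
        (2*T-t)).comp t ((hasDerivAt_id t).const_sub (2*T)))
    refine (e.mul g).congr_deriv ?_
    have tl := telescope a ha n t (2*T-t)
    rw [← Finset.mul_sum] at tl
    have e3 : (∑ p ∈ Finset.range (n+1), (CF a (p+1) (n-p) t * CF (-a) (p+1) (n-p+1) (2*T-t)
          + CF a (p+1) (n-p+1) t * (CF (-a) (p+1) (n-p) (2*T-t) * (-1)))) - a * SS a n t (2*T-t)
        = (1 - Real.exp (a*t) * Real.exp (-a*(2*T-t))) * (t*(2*T-t))^n /
          (a * (n.factorial : ℝ)^2) := by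
      have : (1 - Real.exp (a*t) * Real.exp (-a*(2*T-t))) * (t*(2*T-t))^n /
          (a * (n.factorial : ℝ)^2) = ((1 - Real.exp (a*t) * Real.exp (-a*(2*T-t))) *
          (t*(2*T-t))^n / (n.factorial : ℝ)^2) / a := by
        field_simp
      rw [this, ← tl, mul_div_cancel_left₀ _ ha, SS, Finset.mul_sum, ← Finset.sum_sub_distrib]
      apply Finset.sum_congr rfl
      intro p _
      ring
    have e4 : Real.exp (a*(T-t)) * (1 - Real.exp (a*t) * Real.exp (-a*(2*T-t))) =
        2 * Real.sinh (a*(T-t)) := by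
      rw [Real.sinh_eq, mul_sub, ← Real.exp_add, ← Real.exp_add, mul_one,
        show a*(T-t) + (a*t + -a*(2*T-t)) = -(a*(T-t)) by ring]
      ring
    have e5 : 2 * Real.sinh (a*(T-t)) * (T^2-(T-t)^2)^n / (a*(n.factorial:ℝ)^2) =
        Real.exp (a*(T-t)) * ((1 - Real.exp (a*t) * Real.exp (-a*(2*T-t))) *
          (t*(2*T-t))^n / (a*(n.factorial:ℝ)^2)) := by
      rw [← e4, show T^2-(T-t)^2 = t*(2*T-t) by ring]; ring
    rw [e5, ← e3]
    ring
  have h := intervalIntegral.integral_eq_sub_of_hasDerivAt (a := 0) (b := T) (fun t _ => hd t)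
    (Continuous.intervalIntegrable (by fun_prop) _ _)
  rw [intervalIntegral.integral_comp_sub_left (fun s =>
    2 * Real.sinh (a*s) * (T^2-s^2)^n / (a * (n.factorial : ℝ)^2)) T] at h
  have h0 : SS a n 0 (2*T-0) = 0 := by
    unfold SS
    apply Finset.sum_eq_zero
    intro p _
    rw [CF_zero a _ p (n-p) rfl, zero_mul]
  rw [h0, show 2*T-T = T by ring] at h
  simp only [sub_self, sub_zero, mul_zero, Real.exp_zero, one_mul] at h
  exact h.symm

theorem beta_int (T : ℝ) (n : ℕ) : ∀ p : ℕ, ∫ s in (0:ℝ)..T, s^(2*p+1) * (T^2-s^2)^n =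
    T^(2*n+2*p+2) * (p.factorial : ℝ) * (n.factorial : ℝ) / (2 * ((n+p+1).factorial : ℝ)) := by
  induction n with
  | zero =>
    intro p
    simp only [pow_zero, mul_one, integral_pow]
    rw [zero_add, Nat.factorial_succ]
    push_cast
    have : (p.factorial : ℝ) ≠ 0 := by positivity
    field_simp
    simp; ring
  | succ n ih =>
    intro p
    have hd : ∀ s ∈ Set.uIcc 0 T, HasDerivAt (fun s : ℝ => s^(2*p+2) * (T^2-s^2)^(n+1))
        ((2*p+2) * (s^(2*p+1) * (T^2-s^2)^(n+1)) -
          2*(n+1) * (s^(2*(p+1)+1) * (T^2-s^2)^n)) s := by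
      intro s _
      have d1 := hasDerivAt_pow (2*p+2) s
      have d2 := (((hasDerivAt_pow 2 s).const_sub (T^2)).pow (n+1))
      refine (d1.mul d2).congr_deriv ?_
      simp
      ring
    have h := intervalIntegral.integral_eq_sub_of_hasDerivAt hd
      (Continuous.intervalIntegrable (by fun_prop) _ _)
    rw [intervalIntegral.integral_sub (Continuous.intervalIntegrable (by fun_prop) _ _)
      (Continuous.intervalIntegrable (by fun_prop) _ _), intervalIntegral.integral_const_mul,
      intervalIntegral.integral_const_mul, ih (p+1)] at h
    simp only [sub_self, ne_eq, Nat.add_eq_zero_iff, one_ne_zero, and_false, not_false_eq_true,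
      zero_pow, mul_zero, OfNat.ofNat_ne_zero, zero_mul] at h
    have hp : (2*(p:ℝ)+2) ≠ 0 := by positivity
    have h' := eq_div_of_mul_eq hp ((mul_comm _ _).trans (sub_eq_zero.1 h))
    rw [h', Nat.factorial_succ p, Nat.factorial_succ n, show n+(p+1)+1 = n+1+p+1 by ring]
    push_cast
    field_simp
    ring

theorem SS_hasSum (a : ℝ) (ha : a ≠ 0) (n : ℕ) (T : ℝ) (hT : 0 ≤ T) :
    HasSum (fun p : ℕ => a^(2*p) * T^(2*n+2*p+2) * (p.factorial : ℝ) /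
      (((2*p+1).factorial : ℝ) * (n.factorial : ℝ) * ((n+p+1).factorial : ℝ))) (SS a n T T) := by
  rw [SS_int a ha]
  have hs : ∀ s : ℝ, HasSum (fun p : ℕ => 2 * ((a*s)^(2*p+1) / ((2*p+1).factorial : ℝ)) *
      (T^2-s^2)^n / (a * (n.factorial : ℝ)^2))
      (2 * Real.sinh (a*s) * (T^2-s^2)^n / (a * (n.factorial : ℝ)^2)) := fun s =>
    (((Real.hasSum_sinh (a*s)).mul_left 2).mul_right _).div_const _
  have hb := (((Real.hasSum_sinh (|a| * T)).mul_left 2).mul_right ((T^2)^n)).div_const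
    (|a| * (n.factorial : ℝ)^2)
  have := intervalIntegral.hasSum_integral_of_dominated_convergence (μ := volume) (a := 0) (b := T)
    (F := fun (p : ℕ) (s : ℝ) => 2 * ((a*s)^(2*p+1) / ((2*p+1).factorial : ℝ)) *
      (T^2-s^2)^n / (a * (n.factorial : ℝ)^2))
    (f := fun s => 2 * Real.sinh (a*s) * (T^2-s^2)^n / (a * (n.factorial : ℝ)^2))
    (fun (p : ℕ) (_ : ℝ) => 2 * ((|a| * T)^(2*p+1) / ((2*p+1).factorial : ℝ)) *
      (T^2)^n / (|a| * (n.factorial : ℝ)^2))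
    (fun p => (by fun_prop : Continuous _).aestronglyMeasurable)
    (fun p => Filter.Eventually.of_forall fun s hs => ?_)
    (Filter.Eventually.of_forall fun s hs => hb.summable)
    (by simp)
    (Filter.Eventually.of_forall fun s _ => hs s)
  · refine Eq.mp (congrArg (fun f => HasSum f _) (funext fun p => Eq.symm ?_)) this
    have e : ∀ s : ℝ, 2 * ((a*s)^(2*p+1) / ((2*p+1).factorial : ℝ)) *
      (T^2-s^2)^n / (a * (n.factorial : ℝ)^2) = (2 * a^(2*p+1) / (((2*p+1).factorial : ℝ) *
       (a * (n.factorial : ℝ)^2))) * (s^(2*p+1) * (T^2-s^2)^n) := by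
      intro s; rw [mul_pow]; field_simp
    simp_rw [e]
    rw [intervalIntegral.integral_const_mul, beta_int, pow_succ a]
    field_simp
  · rw [Set.uIoc_of_le hT] at hs
    rw [Real.norm_eq_abs]
    simp only [abs_mul, abs_div, abs_pow, Nat.abs_cast, abs_two]
    have h1 : |s| ≤ T := by rw [abs_of_pos hs.1]; exact hs.2
    have h2 : |T^2 - s^2| ≤ T^2 := by
      rw [abs_of_nonneg] <;> nlinarith [hs.1, hs.2]
    gcongr

theorem toReal_ind (a : ℝ) (ha : a ≠ 0) (p q : ℕ) (T : ℝ) (hT : 0 ≤ T) :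
    (ind (CF a (p+1) (q+1)) T).toReal = CF a (p+1) (q+1) T := by
  rcases hT.eq_or_lt with h | h
  · rw [← h, CF_zero a _ p q rfl]; simp [ind]
  · simp [ind, h, CF_nonneg a ha (p+1) q T hT]

theorem Ikl_eq (p q : ℕ) (u L : ℝ) (hu : u ≠ 0) (hL : 0 ≤ L) :
    Ikl (p+q+2) (p+2) u L = CF (2*u) (p+1) (q+1) (L/2) := by
  have hu2 : 2*u ≠ 0 := by simpa using hu
  unfold Ikl
  have h := simplex_int (p+q+2-1) (fun i x => if i < p+1 then Real.exp (2*u*x) else 1)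
    (fun i => by split_ifs <;> fun_prop) (fun i x _ => by split_ifs <;> positivity) (L/2)
  have hJ := JJ_I (2*u) hu2 (p+1) q
    (fun i => ind (fun x => if i < p+1 then Real.exp (2*u*x) else 1))
    (fun i hi => by simp [hi]) (fun i hi => by simp [not_lt.2 hi])
  have e : p+q+2-1 = p+1+q := by omega
  have e' : JJ (p+q+2-1) (fun i => ind (fun x => if i < p+1 then Real.exp (2*u*x) else 1)) =
    ind (CF (2*u) (p+1) (q+1)) := by rw [e, hJ]
  rw [e', toReal_ind _ hu2 _ _ _ (by linarith)] at h
  rw [← h]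
  congr 1
  funext v
  rw [if_neg (by omega), mul_one, Finset.mul_sum, Real.exp_sum, Finset.prod_filter]
  rfl

theorem Itkl_eq (p q : ℕ) (u L : ℝ) (hu0 : u ≠ 0) (hu : |u| < 1/2) (hL : 0 ≤ L) :
    Itkl (p+q+2) (p+2) u L = KK (2*u) * CF (-(2*u)) (p+1) (q+1) (L/2) := by
  have hu2 : 2*u ≠ 0 := by simpa using hu0
  have hu3 : -(2*u) ≠ 0 := neg_ne_zero.2 hu2
  have hlt := abs_lt.1 hu
  unfold Itkl
  set φ : ℕ → ℝ → ℝ := fun i x => (if 1 ≤ i ∧ i ≤ p+1 then Real.exp (-(2*u)*x) else 1) *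
    (if i = p+1 then (1 - Real.exp (-x))^(-(2*u)) else 1) *
    (if i = 0 then (1 - Real.exp (-x))^(2*u) else 1) with hφ
  have hm : ∀ i, Measurable (φ i) := by
    intro i
    simp only [hφ]
    split_ifs <;> fun_prop
  have h := simplex_int (p+q+2-1) φ hm (fun i x hx => by
    have : 0 ≤ 1 - Real.exp (-x) := by simp [hx.le]
    simp only [hφ]
    split_ifs <;> positivity) (L/2)
  have hK := JJ_K (-(2*u)) hu3 _ _ _ (ind_meas (by fun_prop)) (ind_meas (by fun_prop))
    (fg_conv (2*u) (by linarith) (by linarith) hu2) p q (fun i => ind (φ (i+1)))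
    (fun i hi => by
      congr 1; funext x
      simp only [hφ]
      split_ifs <;> first | (exfalso; omega) | ring)
    (by
      congr 1; funext x
      simp only [hφ]
      split_ifs <;> first | (exfalso; omega) | ring)
    (fun i hi => by
      congr 1; funext x
      simp only [hφ]
      split_ifs <;> first | (exfalso; omega) | ring)
  have e : p+q+2-1 = p+q+1 := by omega
  have e0 : (fun x => (1 - Real.exp (-x))^(2*u)) = φ 0 := by
    funext x; simp [hφ]
  have e' : JJ (p+q+2-1) (fun i => ind (φ i)) =
    fun x => ENNReal.ofReal (KK (2*u)) * ind (CF (-(2*u)) (p+1) (q+1)) x := by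
    rw [e, ← hK, e0]; rfl
  rw [e'] at h
  simp only [] at h
  rw [ENNReal.toReal_mul, ENNReal.toReal_ofReal
    (beta_val (2*u) (by linarith) (by linarith) hu2).1.le,
    toReal_ind _ hu3 _ _ _ (by linarith)] at h
  rw [← h]
  congr 1
  funext v
  have e1 : (∏ i : Fin (p+q+2-1), φ i (v i)) * φ (p+q+2-1) (L/2 - ∑ i, v i) =
      ∏ i ∈ Finset.range (p+q+2-1+1), φ i (wcoord (p+q+2) L v (i+1)) := by
    rw [Finset.prod_range_succ, Finset.prod_range]
    congr 1
    · apply Finset.prod_congr rfl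
      intro i _
      have hi : (i:ℕ) ≤ p+q := by have := i.isLt; omega
      simp [wcoord, hi]
    · simp [wcoord]
  rw [e1]
  simp only [hφ]
  rw [Finset.prod_mul_distrib, Finset.prod_mul_distrib, Finset.prod_ite_eq', Finset.prod_ite_eq',
    if_pos (by simp), if_pos (by simp), Finset.mul_sum, Real.exp_sum, ← Finset.prod_filter]
  congr 2
  apply Finset.prod_nbij' (fun j => j-1) (fun i => i+1)
  · intro j hj; simp at hj ⊢; omega
  · intro j hj; simp at hj ⊢; omega
  · intro j hj; simp at hj ⊢; omega
  · intro j hj; simp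
  · intro j hj; simp at hj; rw [Nat.sub_add_cancel (by omega)]

/-- **Sum over exit edges (proof of Proposition 5.2).** For `k ≥ 2`, `0 < |u| < 1/2`
and `L ≥ 0`:
`∑_{ℓ=2}^k I_{k,ℓ}(u,L) Ĩ_{k,ℓ}(u,L)
  = (2π/(u sin(2πu))) 4^{1−k} L^{2k−4} ∑_{p≥1} u^{2p} L^{2p} · 2 p!/((2p)!(k−2)!(k+p−2)!)`,
the series (indexed here by `p = q+1`, `q ≥ 0`) converging absolutely. -/
theorem stmt_7 (k : ℕ) (hk : 2 ≤ k) (u L : ℝ) (hu0 : 0 < |u|) (hu : |u| < 1/2) (hL : 0 ≤ L) :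
    Summable (fun q : ℕ =>
        |u^(2*(q+1)) * L^(2*(q+1)) * (2 * ((q+1).factorial : ℝ))
          / (((2*(q+1)).factorial : ℝ) * ((k-2).factorial : ℝ)
              * ((k+(q+1)-2).factorial : ℝ))|) ∧
    ∑ l ∈ Finset.Icc 2 k, Ikl k l u L * Itkl k l u L
      = (2*π / (u * Real.sin (2*π*u))) * (4:ℝ)^(1 - (k:ℤ)) * L^(2*k-4)
        * ∑' q : ℕ, u^(2*(q+1)) * L^(2*(q+1)) * (2 * ((q+1).factorial : ℝ))
            / (((2*(q+1)).factorial : ℝ) * ((k-2).factorial : ℝ)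
                * ((k+(q+1)-2).factorial : ℝ)) := by
  have hu' : u ≠ 0 := abs_pos.1 hu0
  have ha : 2*u ≠ 0 := by simpa using hu'
  obtain ⟨n, rfl⟩ : ∃ n, k = n+2 := ⟨k-2, by omega⟩
  have hn : n + 2 - 2 = n := by omega
  have hq : ∀ q, n + 2 + (q+1) - 2 = n+q+1 := fun q => by omega
  simp only [hn, hq]
  constructor
  · have hs : Summable (fun q : ℕ => 2 * (((u*L)^2)^(q+1) / ((q+1).factorial : ℝ))) :=
      ((summable_nat_add_iff 1).2 (Real.summable_pow_div_factorial ((u*L)^2))).mul_left 2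
    refine Summable.of_nonneg_of_le (fun q => abs_nonneg _) (fun q => ?_) hs
    have e : u^(2*(q+1)) * L^(2*(q+1)) = ((u*L)^2)^(q+1) := by
      rw [← mul_pow, pow_mul]
    rw [e, abs_of_nonneg (by positivity), mul_div_assoc]
    have h1 : (((q+1).factorial : ℝ)) ≤ ((2*(q+1)).factorial : ℝ) := by
      exact_mod_cast Nat.factorial_le (by omega)
    have h2 : (((q+1).factorial : ℝ)) ≤ ((n+q+1).factorial : ℝ) := by
      exact_mod_cast Nat.factorial_le (by omega)
    have h3 : (1:ℝ) ≤ (n.factorial : ℝ) := by exact_mod_cast Nat.factorial_pos n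
    have h4 : (0:ℝ) < ((q+1).factorial : ℝ) := by positivity
    have h5 : ((q+1).factorial : ℝ) / (((2*(q+1)).factorial : ℝ) * (n.factorial : ℝ) *
        ((n+q+1).factorial : ℝ)) ≤ 1 / ((q+1).factorial : ℝ) := by
      rw [div_le_div_iff₀ (by positivity) h4, one_mul]
      calc ((q+1).factorial : ℝ) * ((q+1).factorial : ℝ)
          = ((q+1).factorial : ℝ) * 1 * ((q+1).factorial : ℝ) := by ring
        _ ≤ _ := by gcongr
    calc _ ≤ 2 * (((u*L)^2)^(q+1) * (1 / ((q+1).factorial : ℝ))) := by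
          rw [mul_div_assoc (2:ℝ), mul_left_comm]
          exact mul_le_mul_of_nonneg_left (mul_le_mul_of_nonneg_left h5 (by positivity))
            (by norm_num)
      _ = _ := by ring
  · have hsum : ∑ l ∈ Finset.Icc 2 (n+2), Ikl (n+2) l u L * Itkl (n+2) l u L =
        KK (2*u) * SS (2*u) n (L/2) (L/2) := by
      rw [SS, Finset.mul_sum]
      symm
      apply Finset.sum_nbij' (fun p => p+2) (fun l => l-2)
      · intro j hj; simp at hj ⊢; omega
      · intro j hj; simp at hj ⊢; omega
      · intro j hj; simp
      · intro j hj; simp at hj ⊢; omega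
      · intro p hp
        have hp' : p ≤ n := by simpa [Nat.lt_succ_iff] using hp
        have e : n + 2 = p + (n-p) + 2 := by omega
        have h1 : Ikl (n+2) (p+2) u L = CF (2*u) (p+1) (n-p+1) (L/2) := by
          rw [← Ikl_eq p (n-p) u L hu' hL, ← e]
        have h2 : Itkl (n+2) (p+2) u L = KK (2*u) * CF (-(2*u)) (p+1) (n-p+1) (L/2) := by
          rw [← Itkl_eq p (n-p) u L hu' hu hL, ← e]
        rw [h1, h2]; ring
    rw [hsum]
    have hS := SS_hasSum (2*u) ha n (L/2) (by linarith)
    have e1 : ∀ q : ℕ, L^(2*(n+2)-4) * (u^(2*(q+1)) * L^(2*(q+1)) * (2 * ((q+1).factorial : ℝ))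
          / (((2*(q+1)).factorial : ℝ) * (n.factorial : ℝ) * ((n+q+1).factorial : ℝ))) =
        4^n * (2*u)^2 * ((2*u)^(2*q) * (L/2)^(2*n+2*q+2) * (q.factorial : ℝ) /
      (((2*q+1).factorial : ℝ) * (n.factorial : ℝ) * ((n+q+1).factorial : ℝ))) := by
      intro q
      have f1 : 2*(n+2)-4 = 2*n := by omega
      have f2 : ((2*(q+1)).factorial : ℝ) = (2*(q+1)) * ((2*q+1).factorial : ℝ) := by
        rw [show 2*(q+1) = (2*q+1)+1 by ring, Nat.factorial_succ]; push_cast; ring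
      have f3 : ((q+1).factorial : ℝ) = (q+1) * (q.factorial : ℝ) := by
        rw [Nat.factorial_succ]; push_cast; ring
      have f4 : (L/2)^(2*n+2*q+2) = L^(2*n) * L^(2*(q+1)) / (4^n * 2^(2*q) * 4) := by
        rw [div_pow, ← pow_add, show (4:ℝ)^n = 2^(2*n) by rw [pow_mul]; norm_num,
          show (4:ℝ) = 2^2 by norm_num, ← pow_add, ← pow_add]
        ring_nf
      have f5 : (2*u)^(2*q) = 2^(2*q) * u^(2*q) := by rw [mul_pow]
      have f6 : u^(2*(q+1)) = u^(2*q) * u^2 := by ring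
      rw [f1, f2, f3, f4, f5, f6]
      have : (q:ℝ) + 1 ≠ 0 := by positivity
      field_simp
      ring
    rw [mul_assoc, ← tsum_mul_left]
    simp_rw [e1]
    rw [tsum_mul_left, hS.tsum_eq]
    have e2 : (4:ℝ)^(1 - ((n+2 : ℕ):ℤ)) = 1 / (4 * 4^n) := by
      rw [show 1 - ((n+2 : ℕ):ℤ) = -((n+1 : ℕ) : ℤ) by push_cast; ring, zpow_neg, zpow_natCast,
        pow_succ]
      ring
    rw [e2, KK, show π * (2*u) = 2*π*u by ring]
    rcases eq_or_ne (Real.sin (2*π*u)) 0 with h | h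
    · simp [h]
    · field_simp
      try ring
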